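/- Let Y ⊆ X be a subset that is bounded above, and let p be any upper bound of Y (i.e. y ≼ p for all y ∈ Y). Then the element s := (⨆_{z ∈ Y} ⟨z = p⟩) • p is a least upper bound of Y for the partial order ≼: (a) y ≼ s for every y ∈ Y, and (b) for every upper bound q of Y (i.e. y ≼ q for all y ∈ Y), s ≼ q. -/

import Mathlib

/-- A set `X` equipped with an action of a Heyting algebra `Ω` (regarded as a
monoid under the meet operation `⊓` with unit `⊤`) together with an
`Ω`-valued equality (truth-value assignment) `e p q = ⟨p = q⟩`. -/
structure HeytingValuedSet (Ω : Type*) [Order.Frame Ω] (X : Type*) where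
  /-- the monoid action `•` of `(Ω, ⊓, ⊤)` on `X` -/
  act : Ω → X → X
  /-- the truth value `⟨p = q⟩` of the assertion `p = q` -/
  e : X → X → Ω
  act_inf : ∀ (α β : Ω) (p : X), act (α ⊓ β) p = act α (act β p)
  act_top : ∀ p : X, act ⊤ p = p
  welldef : ∀ p q : X, act (e p q) p = act (e p q) q
  unit_bound : ∀ (α : Ω) (p : X), α ≤ e (act α p) p
  e_symm : ∀ p q : X, e p q ≤ e q p
  e_trans : ∀ p q r : X, e p q ⊓ e q r ≤ e p r

/-- The relation `p ≼ q` on `X`: there exists `α ∈ Ω` with `p = α • q`. -/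
def HeytingValuedSet.ple {Ω : Type*} [Order.Frame Ω] {X : Type*}
    (h : HeytingValuedSet Ω X) (p q : X) : Prop :=
  ∃ α : Ω, p = h.act α q

theorem HeytingValuedSet.act_eq_of_le {Ω X : Type*} [Order.Frame Ω] (h : HeytingValuedSet Ω X)
    {a : Ω} {p q : X} (ha : a ≤ h.e p q) : h.act a p = h.act a q := by
  have h1 := congrArg (h.act a) (h.welldef p q)
  rwa [← h.act_inf, ← h.act_inf, inf_eq_left.mpr ha] at h1

theorem HeytingValuedSet.le_of_act_eq {Ω X : Type*} [Order.Frame Ω] (h : HeytingValuedSet Ω X)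
    {a : Ω} {p q : X} (ha : h.act a p = h.act a q) : a ≤ h.e p q := by
  have h1 : a ≤ h.e p (h.act a p) := (h.unit_bound a p).trans (h.e_symm _ _)
  have h2 : a ≤ h.e (h.act a p) q := by rw [ha]; exact h.unit_bound a q
  exact (le_inf h1 h2).trans (h.e_trans _ _ _)

/-- Let `Ω` be a frame (complete Heyting algebra) and `Y ⊆ X` a subset bounded
above, with `p` any upper bound of `Y`.  Then
`s := (⨆ z ∈ Y, ⟨z = p⟩) • p` is a least upper bound of `Y` for `≼`:
(a) `y ≼ s` for every `y ∈ Y`, and (b) `s ≼ q` for every upper bound `q`. -/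
theorem stmt_9 {Ω X : Type*} [Order.Frame Ω] (h : HeytingValuedSet Ω X)
    (Y : Set X) (p : X) (hp : ∀ y ∈ Y, h.ple y p) :
    (∀ y ∈ Y, h.ple y (h.act (⨆ z ∈ Y, h.e z p) p)) ∧
    (∀ q : X, (∀ y ∈ Y, h.ple y q) → h.ple (h.act (⨆ z ∈ Y, h.e z p) p) q) := by
  constructor
  · intro y hy
    obtain ⟨a, rfl⟩ := hp y hy
    refine ⟨a, ?_⟩
    have ha : a ≤ ⨆ z ∈ Y, h.e z p :=
      (h.unit_bound a p).trans (le_iSup₂ (f := fun z (_ : z ∈ Y) => h.e z p) _ hy)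
    rw [← h.act_inf, inf_eq_left.mpr ha]
  · intro q hq
    choose! b hb using hq
    set S := ⨆ z ∈ Y, h.e z p with hS
    set T := ⨆ z ∈ Y, h.e z p ⊓ b z with hT
    have hbe : ∀ z ∈ Y, b z ≤ h.e z q := fun z hz => by
      have := h.unit_bound (b z) q
      rwa [← hb z hz] at this
    have hg : ∀ z ∈ Y, h.e z p ⊓ b z ≤ h.e p q := fun z hz =>
      (inf_le_inf (h.e_symm _ _) (hbe z hz)).trans (h.e_trans _ _ _)
    have hTpq : T ≤ h.e p q := iSup₂_le hg
    have hTS : T ≤ S := iSup₂_mono fun z _ => inf_le_left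
    have key : ∀ z ∈ Y, h.act (h.e z p) p = h.act (h.e z p ⊓ b z) p := fun z hz => by
      rw [h.act_eq_of_le (hg z hz), h.act_inf, ← hb z hz, h.welldef]
    have hSw : S ≤ h.e (h.act T p) p := iSup₂_le fun z hz => by
      apply h.le_of_act_eq
      have hle : h.e z p ⊓ b z ≤ T :=
        le_iSup₂ (f := fun z (_ : z ∈ Y) => h.e z p ⊓ b z) z hz
      rw [← h.act_inf, inf_comm, h.act_inf, key z hz, ← h.act_inf, inf_eq_right.mpr hle]
    refine ⟨T, ?_⟩
    rw [← h.act_eq_of_le hSw, ← h.act_inf, inf_eq_right.mpr hTS, h.act_eq_of_le hTpq]
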